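/- Let n ≥ 1, let δ > 0, let γ₁, γ₂ > 0 with γ₁ ≠ γ₂, and let φ : ℝ → ℝⁿ be continuous with |φ(s)| ≤ φ_M for all s ∈ [0,δ], where φ_M ≥ 0, and exciting on [0,δ] with level η > 0. For i = 1,2, let Φᵢ : ℝ → Matrix n n ℝ be the state transition matrix of the error dynamics with rate γᵢ on [0,·], i.e., the solution of Φᵢ'(t) = −γᵢ φ(t)φ(t)ᵀ Φᵢ(t) with Φᵢ(0) = I. Assume: (7) 0 < φ_M²γ₂δ < 1, and (8) 0 < (1 − 2ηγ₁/(1 + φ_M²γ₁δ)²)(1 + 2γ₂φ_M²δ/(1 − φ_M²γ₂δ)²) < 1. Then the matrix Φ₁(δ) − Φ₂(δ) is invertible. -/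

import Mathlib

open scoped RealInnerProductSpace

/-!
Fix `v ≠ 0` and follow `x₁ = Φ₁ v` and `x₂ = Φ₂ v`, which solve `x' = -γ φ φᵀ x` with `γ = γ₁, γ₂`
from the same initial point. Write `P = ∫ ‖φ‖²`. The energy identity `(‖x‖²)' = -2γ ⟪φ, x⟫²` yields
two opposite bounds. Since `⟪φ, x⟫² ≤ ‖φ‖² ‖x‖²`, energy decays slowly:
`‖x₂(T)‖² ≥ exp (-2γ₂P) ‖v‖²`. Conversely, a trajectory that dissipates little energy stays close to
`v`, so that excitation in the direction `v` forces dissipation: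
`‖x₁(T)‖² ≤ (1 - 2ηγ₁ / (1 + γ₁P)²) ‖v‖²`. If `1 - 2ηγ₁ / (1 + γ₁P)² < exp (-2γ₂P)`, then
`x₁(T) ≠ x₂(T)`, i.e. `Φ₁(T) - Φ₂(T)` has trivial kernel. Conditions (7) and (8) imply this gap
because `1 - c ≤ exp (-c)` and `P ≤ φ_M² δ`.
-/

open MeasureTheory Set

section CauchySchwarz

lemma sq_integral_mul_le {α : Type*} [MeasurableSpace α] {μ : Measure α} {f g : α → ℝ}
    (hf : MemLp f 2 μ) (hg : MemLp g 2 μ) :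
    (∫ s, f s * g s ∂μ) ^ 2 ≤ (∫ s, f s ^ 2 ∂μ) * ∫ s, g s ^ 2 ∂μ := by
  have inner_toLp {u v : α → ℝ} (hu : MemLp u 2 μ) (hv : MemLp v 2 μ) :
      ⟪hu.toLp u, hv.toLp v⟫ = ∫ s, u s * v s ∂μ := by
    rw [L2.inner_def]
    refine integral_congr_ae ?_
    filter_upwards [hu.coeFn_toLp, hv.coeFn_toLp] with s hus hvs
    simp [hus, hvs, mul_comm]
  simpa only [inner_toLp, sq] using real_inner_mul_inner_self_le (hf.toLp f) (hg.toLp g)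

lemma sq_intervalIntegral_mul_le {a b : ℝ} {f g : ℝ → ℝ} (hab : a ≤ b)
    (hf : ContinuousOn f (Icc a b)) (hg : ContinuousOn g (Icc a b)) :
    (∫ s in a..b, f s * g s) ^ 2 ≤ (∫ s in a..b, f s ^ 2) * ∫ s in a..b, g s ^ 2 := by
  have memLp {u : ℝ → ℝ} (hu : ContinuousOn u (Icc a b)) :
      MemLp u 2 (volume.restrict (Ioc a b)) :=
    (memLp_two_iff_integrable_sq
      ((hu.mono Ioc_subset_Icc_self).aestronglyMeasurable measurableSet_Ioc)).2
      ((hu.pow 2).integrableOn_Icc.mono_set Ioc_subset_Icc_self)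
  simpa only [intervalIntegral.integral_of_le hab] using sq_integral_mul_le (memLp hf) (memLp hg)

end CauchySchwarz

lemma hasDerivAt_integral_of_continuousOn {F : Type*} [NormedAddCommGroup F] [NormedSpace ℝ F]
    [CompleteSpace F] {f : ℝ → F} {a b t : ℝ} (hf : ContinuousOn f (Icc a b)) (ht : t ∈ Ioo a b) :
    HasDerivAt (fun t => ∫ s in a..t, f s) (f t) t := by
  have hf' : ContinuousOn f (Ioo a b) := hf.mono Ioo_subset_Icc_self
  exact intervalIntegral.integral_hasDerivAt_right
    ((hf.mono (Icc_subset_Icc_right ht.2.le)).intervalIntegrable_of_Icc ht.1.le)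
    (hf'.stronglyMeasurableAtFilter isOpen_Ioo t ht) (hf'.continuousAt (Ioo_mem_nhds ht.1 ht.2))

section NormSqIntegral

variable {E : Type*} [NormedAddCommGroup E] {φ : ℝ → E} {a b : ℝ}

lemma integral_norm_sq_nonneg (φ : ℝ → E) (hab : a ≤ b) : 0 ≤ ∫ s in a..b, ‖φ s‖ ^ 2 :=
  intervalIntegral.integral_nonneg hab fun _ _ => sq_nonneg _

lemma integral_norm_sq_le {M : ℝ} (hab : a ≤ b) (hφ : ContinuousOn φ (Icc a b))
    (hM : ∀ s ∈ Icc a b, ‖φ s‖ ≤ M) : ∫ s in a..b, ‖φ s‖ ^ 2 ≤ M ^ 2 * (b - a) := by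
  calc ∫ s in a..b, ‖φ s‖ ^ 2 ≤ ∫ _ in a..b, M ^ 2 :=
        intervalIntegral.integral_mono_on hab ((hφ.norm.pow 2).intervalIntegrable_of_Icc hab)
          intervalIntegrable_const fun s hs => pow_le_pow_left₀ (norm_nonneg _) (hM s hs) 2
    _ = M ^ 2 * (b - a) := by rw [intervalIntegral.integral_const, smul_eq_mul, mul_comm]

end NormSqIntegral

section ErrorDynamics

variable {E : Type*} [NormedAddCommGroup E] [InnerProductSpace ℝ E]
  {φ x : ℝ → E} {γ η a b t : ℝ}

/-- The signal `φ` is exciting on `[a, b]` with level `η`: the Gram operator of `φ` on `[a, b]` is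
bounded below by `η`. -/
def IsExciting (φ : ℝ → E) (a b η : ℝ) : Prop :=
  ∀ v : E, η * ‖v‖ ^ 2 ≤ ∫ s in a..b, ⟪φ s, v⟫ ^ 2

/-- The curve `x` solves the error dynamics `x' = -γ φ φᵀ x` on `[a, b]`, with one-sided derivatives
at the endpoints. The operator `φ φᵀ` is written `v ↦ ⟪φ, v⟫ • φ`, which makes sense in every real
inner product space. -/
def IsErrorTrajectory (γ : ℝ) (φ : ℝ → E) (a b : ℝ) (x : ℝ → E) : Prop :=
  ∀ t ∈ Icc a b, HasDerivWithinAt x (-(γ * ⟪φ t, x t⟫) • φ t) (Icc a b) t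

namespace IsErrorTrajectory

lemma continuousOn (hx : IsErrorTrajectory γ φ a b x) : ContinuousOn x (Icc a b) :=
  fun t ht => (hx t ht).continuousWithinAt

lemma mono_right (hx : IsErrorTrajectory γ φ a b x) (ht : t ≤ b) : IsErrorTrajectory γ φ a t x :=
  fun s hs => (hx s (Icc_subset_Icc_right ht hs)).mono (Icc_subset_Icc_right ht)

lemma hasDerivAt (hx : IsErrorTrajectory γ φ a b x) (ht : t ∈ Ioo a b) :
    HasDerivAt x (-(γ * ⟪φ t, x t⟫) • φ t) t :=
  (hx t (Ioo_subset_Icc_self ht)).hasDerivAt (Icc_mem_nhds ht.1 ht.2)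

lemma hasDerivAt_norm_sq (hx : IsErrorTrajectory γ φ a b x) (ht : t ∈ Ioo a b) :
    HasDerivAt (fun s => ‖x s‖ ^ 2) (-(2 * γ * ⟪φ t, x t⟫ ^ 2)) t := by
  convert (hx.hasDerivAt ht).norm_sq using 1
  rw [inner_smul_right, real_inner_comm]
  ring

lemma mul_integral_inner_sq (hab : a ≤ b) (hφ : ContinuousOn φ (Icc a b))
    (hx : IsErrorTrajectory γ φ a b x) :
    2 * γ * ∫ s in a..b, ⟪φ s, x s⟫ ^ 2 = ‖x a‖ ^ 2 - ‖x b‖ ^ 2 := by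
  have energy_balance := intervalIntegral.integral_eq_sub_of_hasDerivAt_of_le hab
    (hx.continuousOn.norm.pow 2) (fun t ht => hx.hasDerivAt_norm_sq ht)
    ((((hφ.inner hx.continuousOn).pow 2).intervalIntegrable_of_Icc hab).const_mul (2 * γ)).neg
  rw [intervalIntegral.integral_neg, intervalIntegral.integral_const_mul] at energy_balance
  simp only [Pi.pow_apply] at energy_balance
  linarith

lemma norm_sub_le (hγ : 0 ≤ γ) (hab : a ≤ b) (hφ : ContinuousOn φ (Icc a b))
    (hx : IsErrorTrajectory γ φ a b x) :
    ‖x b - x a‖ ≤ γ * ∫ s in a..b, |⟪φ s, x s⟫| * ‖φ s‖ := by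
  rw [← intervalIntegral.integral_const_mul]
  refine norm_sub_le_integral_of_norm_deriv_le_of_le hab hx.continuousOn
    (fun t ht => (hx.hasDerivAt ht).differentiableAt.differentiableWithinAt)
    (.of_forall fun t ht => ?_)
    (ContinuousOn.intervalIntegrable_of_Icc hab
      (((hφ.inner hx.continuousOn).abs.mul hφ.norm).const_mul γ))
  rw [(hx.hasDerivAt ht).deriv, norm_smul, norm_neg, norm_mul, Real.norm_of_nonneg hγ,
    Real.norm_eq_abs, mul_assoc]

lemma norm_sub_le_of_mem_Icc (hγ : 0 ≤ γ) (hφ : ContinuousOn φ (Icc a b))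
    (hx : IsErrorTrajectory γ φ a b x) (ht : t ∈ Icc a b) :
    ‖x t - x a‖ ≤ γ * ∫ s in a..b, |⟪φ s, x s⟫| * ‖φ s‖ := by
  refine ((hx.mono_right ht.2).norm_sub_le hγ ht.1 (hφ.mono (Icc_subset_Icc_right ht.2))).trans ?_
  gcongr
  exact intervalIntegral.integral_mono_interval le_rfl ht.1 ht.2
    (.of_forall fun s => by positivity)
    (((hφ.inner hx.continuousOn).abs.mul hφ.norm).intervalIntegrable_of_Icc (ht.1.trans ht.2))

lemma abs_inner_initial_le (hγ : 0 ≤ γ) (hφ : ContinuousOn φ (Icc a b))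
    (hx : IsErrorTrajectory γ φ a b x) (ht : t ∈ Icc a b) :
    |⟪φ t, x a⟫| ≤ |⟪φ t, x t⟫| + ‖φ t‖ * (γ * ∫ s in a..b, |⟪φ s, x s⟫| * ‖φ s‖) := by
  calc |⟪φ t, x a⟫| = |⟪φ t, x t⟫ - ⟪φ t, x t - x a⟫| := by rw [inner_sub_right, sub_sub_cancel]
    _ ≤ |⟪φ t, x t⟫| + |⟪φ t, x t - x a⟫| := abs_sub _ _
    _ ≤ |⟪φ t, x t⟫| + ‖φ t‖ * ‖x t - x a‖ := by gcongr; exact abs_real_inner_le_norm _ _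
    _ ≤ _ := by gcongr; exact hx.norm_sub_le_of_mem_Icc hγ hφ ht

lemma integral_inner_initial_sq_le (hγ : 0 ≤ γ) (hab : a ≤ b) (hφ : ContinuousOn φ (Icc a b))
    (hx : IsErrorTrajectory γ φ a b x) :
    ∫ s in a..b, ⟪φ s, x a⟫ ^ 2 ≤
      (1 + γ * ∫ s in a..b, ‖φ s‖ ^ 2) ^ 2 * ∫ s in a..b, ⟪φ s, x s⟫ ^ 2 := by
  have hp : ContinuousOn (fun s => |⟪φ s, x s⟫|) (Icc a b) := (hφ.inner hx.continuousOn).abs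
  have cauchy_schwarz := sq_intervalIntegral_mul_le hab hp hφ.norm
  simp only [sq_abs] at cauchy_schwarz
  set P := ∫ s in a..b, ‖φ s‖ ^ 2
  set D := ∫ s in a..b, ⟪φ s, x s⟫ ^ 2
  set q := ∫ s in a..b, |⟪φ s, x s⟫| * ‖φ s‖
  have hP : 0 ≤ P := integral_norm_sq_nonneg φ hab
  have pointwise (s : ℝ) (hs : s ∈ Icc a b) : ⟪φ s, x a⟫ ^ 2 ≤
      ⟪φ s, x s⟫ ^ 2 + 2 * γ * q * (|⟪φ s, x s⟫| * ‖φ s‖) + (γ * q) ^ 2 * ‖φ s‖ ^ 2 := by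
    calc ⟪φ s, x a⟫ ^ 2 ≤ (|⟪φ s, x s⟫| + ‖φ s‖ * (γ * q)) ^ 2 :=
          sq_le_sq.2 ((hx.abs_inner_initial_le hγ hφ hs).trans (le_abs_self _))
      _ = _ := by rw [add_sq, sq_abs]; ring
  have hpi : IntervalIntegrable (fun s => ⟪φ s, x s⟫ ^ 2) volume a b :=
    ((hφ.inner hx.continuousOn).pow 2).intervalIntegrable_of_Icc hab
  have hqi : IntervalIntegrable (fun s => 2 * γ * q * (|⟪φ s, x s⟫| * ‖φ s‖)) volume a b :=
    ((hp.mul hφ.norm).intervalIntegrable_of_Icc hab).const_mul _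
  have hPi : IntervalIntegrable (fun s => (γ * q) ^ 2 * ‖φ s‖ ^ 2) volume a b :=
    ((hφ.norm.pow 2).intervalIntegrable_of_Icc hab).const_mul _
  calc ∫ s in a..b, ⟪φ s, x a⟫ ^ 2
      ≤ ∫ s in a..b, (⟪φ s, x s⟫ ^ 2 + 2 * γ * q * (|⟪φ s, x s⟫| * ‖φ s‖)
          + (γ * q) ^ 2 * ‖φ s‖ ^ 2) :=
        intervalIntegral.integral_mono_on hab
          (((hφ.inner continuousOn_const).pow 2).intervalIntegrable_of_Icc hab)
          ((hpi.add hqi).add hPi) pointwise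
    _ = D + 2 * γ * q * q + (γ * q) ^ 2 * P := by
        rw [intervalIntegral.integral_add (hpi.add hqi) hPi, intervalIntegral.integral_add hpi hqi,
          intervalIntegral.integral_const_mul, intervalIntegral.integral_const_mul]
    _ = D + (2 * γ + γ ^ 2 * P) * q ^ 2 := by ring
    _ ≤ D + (2 * γ + γ ^ 2 * P) * (D * P) := by gcongr
    _ = (1 + γ * P) ^ 2 * D := by ring

lemma norm_sq_le_of_isExciting (hγ : 0 ≤ γ) (hab : a ≤ b) (hφ : ContinuousOn φ (Icc a b))
    (hexc : IsExciting φ a b η) (hx : IsErrorTrajectory γ φ a b x) :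
    ‖x b‖ ^ 2 ≤ (1 - 2 * η * γ / (1 + γ * ∫ s in a..b, ‖φ s‖ ^ 2) ^ 2) * ‖x a‖ ^ 2 := by
  have hP := integral_norm_sq_nonneg φ hab
  have dissipation : η * ‖x a‖ ^ 2 / (1 + γ * ∫ s in a..b, ‖φ s‖ ^ 2) ^ 2 ≤
      ∫ s in a..b, ⟪φ s, x s⟫ ^ 2 := by
    rw [div_le_iff₀' (by positivity)]
    exact (hexc (x a)).trans (hx.integral_inner_initial_sq_le hγ hab hφ)
  calc ‖x b‖ ^ 2 = ‖x a‖ ^ 2 - 2 * γ * ∫ s in a..b, ⟪φ s, x s⟫ ^ 2 := by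
        rw [hx.mul_integral_inner_sq hab hφ]; ring
    _ ≤ ‖x a‖ ^ 2 - 2 * γ * (η * ‖x a‖ ^ 2 / (1 + γ * ∫ s in a..b, ‖φ s‖ ^ 2) ^ 2) := by gcongr
    _ = _ := by ring

lemma exp_mul_norm_sq_le (hγ : 0 ≤ γ) (hab : a ≤ b) (hφ : ContinuousOn φ (Icc a b))
    (hx : IsErrorTrajectory γ φ a b x) :
    Real.exp (-(2 * γ * ∫ s in a..b, ‖φ s‖ ^ 2)) * ‖x a‖ ^ 2 ≤ ‖x b‖ ^ 2 := by
  have hcont : ContinuousOn (fun t => ∫ s in a..t, ‖φ s‖ ^ 2) (Icc a b) := by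
    rw [← uIcc_of_le hab]
    exact intervalIntegral.continuousOn_primitive_interval
      (uIcc_of_le hab ▸ (hφ.norm.pow 2).integrableOn_Icc)
  have monotone_weighted : MonotoneOn
      (fun t => Real.exp (2 * γ * ∫ s in a..t, ‖φ s‖ ^ 2) * ‖x t‖ ^ 2) (Icc a b) := by
    refine monotoneOn_of_hasDerivWithinAt_nonneg (convex_Icc a b)
      ((hcont.const_mul _).rexp.mul (hx.continuousOn.norm.pow 2))
      (fun t ht => ?_) (fun t _ => ?_)
      (f' := fun t => Real.exp (2 * γ * ∫ s in a..t, ‖φ s‖ ^ 2) *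
        (2 * γ * (‖φ t‖ ^ 2 * ‖x t‖ ^ 2 - ⟪φ t, x t⟫ ^ 2)))
    · rw [interior_Icc] at ht
      have hP : HasDerivAt (fun t => ∫ s in a..t, ‖φ s‖ ^ 2) (‖φ t‖ ^ 2) t :=
        hasDerivAt_integral_of_continuousOn (hφ.norm.pow 2) ht
      convert! ((hP.const_mul (2 * γ)).exp.mul (hx.hasDerivAt_norm_sq ht)).hasDerivWithinAt using 1
      ring
    · have inner_sq_le : ⟪φ t, x t⟫ ^ 2 ≤ ‖φ t‖ ^ 2 * ‖x t‖ ^ 2 := by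
        rw [← mul_pow]
        exact sq_le_sq.2 ((abs_real_inner_le_norm _ _).trans (le_abs_self _))
      have := sub_nonneg.2 inner_sq_le
      positivity
  have h := monotone_weighted (left_mem_Icc.2 hab) (right_mem_Icc.2 hab) hab
  simp only [intervalIntegral.integral_same, mul_zero, Real.exp_zero, one_mul] at h
  rwa [Real.exp_neg, inv_mul_le_iff₀ (Real.exp_pos _)]

end IsErrorTrajectory

end ErrorDynamics

section DesignConditions

lemma lt_exp_neg_two_mul_of_mul_lt_one {A c : ℝ} (hc : c < 1)
    (h : A * (1 + 2 * c / (1 - c) ^ 2) < 1) : A < Real.exp (-(2 * c)) := by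
  rcases le_or_gt A 0 with hA | hA
  · exact hA.trans_lt (Real.exp_pos _)
  have hc' : 0 < 1 - c := sub_pos.2 hc
  have hsum : 1 + 2 * c / (1 - c) ^ 2 = (1 + c ^ 2) / (1 - c) ^ 2 := by
    field_simp
    ring
  rw [hsum, ← mul_div_assoc, div_lt_one (by positivity)] at h
  calc A ≤ A * (1 + c ^ 2) := le_mul_of_one_le_right hA.le (by linarith [sq_nonneg c])
    _ < (1 - c) ^ 2 := h
    _ ≤ Real.exp (-c) ^ 2 := by gcongr; exact Real.one_sub_le_exp_neg c
    _ = Real.exp (-(2 * c)) := by rw [← Real.exp_nat_mul]; push_cast; ring_nf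

lemma one_sub_div_lt_exp_neg_of_le {η γ₁ γ₂ P Q : ℝ} (hη : 0 ≤ η) (hγ₁ : 0 ≤ γ₁) (hγ₂ : 0 ≤ γ₂)
    (hP : 0 ≤ P) (hPQ : P ≤ Q)
    (h : 1 - 2 * η * γ₁ / (1 + γ₁ * Q) ^ 2 < Real.exp (-(2 * γ₂ * Q))) :
    1 - 2 * η * γ₁ / (1 + γ₁ * P) ^ 2 < Real.exp (-(2 * γ₂ * P)) := by
  calc 1 - 2 * η * γ₁ / (1 + γ₁ * P) ^ 2 ≤ 1 - 2 * η * γ₁ / (1 + γ₁ * Q) ^ 2 := by gcongr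
    _ < Real.exp (-(2 * γ₂ * Q)) := h
    _ ≤ Real.exp (-(2 * γ₂ * P)) := by gcongr

lemma one_sub_div_lt_exp_neg_integral_of_norm_le {E : Type*} [NormedAddCommGroup E] {φ : ℝ → E}
    {a b γ₁ γ₂ η M : ℝ} (hη : 0 ≤ η) (hγ₁ : 0 ≤ γ₁) (hγ₂ : 0 ≤ γ₂) (hab : a ≤ b)
    (hφ : ContinuousOn φ (Icc a b)) (hM : ∀ s ∈ Icc a b, ‖φ s‖ ≤ M)
    (hlt : M ^ 2 * γ₂ * (b - a) < 1)
    (hmul : (1 - 2 * η * γ₁ / (1 + M ^ 2 * γ₁ * (b - a)) ^ 2) *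
      (1 + 2 * γ₂ * M ^ 2 * (b - a) / (1 - M ^ 2 * γ₂ * (b - a)) ^ 2) < 1) :
    1 - 2 * η * γ₁ / (1 + γ₁ * ∫ s in a..b, ‖φ s‖ ^ 2) ^ 2 <
      Real.exp (-(2 * γ₂ * ∫ s in a..b, ‖φ s‖ ^ 2)) := by
  refine one_sub_div_lt_exp_neg_of_le hη hγ₁ hγ₂ (integral_norm_sq_nonneg φ hab)
    (integral_norm_sq_le hab hφ hM) ?_
  have numerator_eq : 2 * γ₂ * M ^ 2 * (b - a) = 2 * (M ^ 2 * γ₂ * (b - a)) := by ring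
  rw [numerator_eq] at hmul
  convert lt_exp_neg_two_mul_of_mul_lt_one hlt hmul using 3 <;> ring

end DesignConditions

lemma isUnit_sub_of_mulVec_ne {ι K : Type*} [Fintype ι] [DecidableEq ι] [Field K]
    {A B : Matrix ι ι K} (h : ∀ v, v ≠ 0 → A.mulVec v ≠ B.mulVec v) : IsUnit (A - B) := by
  refine Matrix.mulVec_injective_iff_isUnit.1 ((injective_iff_map_eq_zero (A - B).mulVecLin).2 ?_)
  intro v hv
  by_contra hv_ne
  exact h v hv_ne (sub_eq_zero.1 ((Matrix.sub_mulVec A B v).symm.trans hv))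

section TransitionMatrix

variable {ι : Type*} [Fintype ι] [DecidableEq ι] {φ : ℝ → EuclideanSpace ℝ ι} {γ a b : ℝ}
  {Φ : ℝ → Matrix ι ι ℝ}

/-- `Φ` is the state transition matrix on `[a, b]` of the error dynamics `x' = -γ φ φᵀ x`. The
matrix equation is stated entrywise, with one-sided derivatives at the endpoints, so that no norm on
matrices has to be chosen. -/
structure IsTransitionMatrix (γ : ℝ) (φ : ℝ → EuclideanSpace ℝ ι) (a b : ℝ)
    (Φ : ℝ → Matrix ι ι ℝ) : Prop where
  initial : Φ a = 1
  hasDerivWithinAt : ∀ t ∈ Icc a b, ∀ i j, HasDerivWithinAt (fun s => Φ s i j)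
    ((-γ • (Matrix.vecMulVec (φ t) (φ t) * Φ t)) i j) (Icc a b) t

lemma IsTransitionMatrix.isErrorTrajectory_mulVec (hΦ : IsTransitionMatrix γ φ a b Φ) (v : ι → ℝ) :
    IsErrorTrajectory γ φ a b fun s => WithLp.toLp 2 (Matrix.mulVec (Φ s) v) := by
  intro t ht
  have hderiv : HasDerivWithinAt (fun s => Matrix.mulVec (Φ s) v)
      (Matrix.mulVec (-γ • (Matrix.vecMulVec (φ t) (φ t) * Φ t)) v) (Icc a b) t :=
    hasDerivWithinAt_pi.2 fun i =>
      HasDerivWithinAt.fun_sum fun j _ => (hΦ.hasDerivWithinAt t ht i j).mul_const (v j)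
  have rank_one_mulVec : -(γ * ⟪φ t, WithLp.toLp 2 (Matrix.mulVec (Φ t) v)⟫) • φ t =
      WithLp.toLp 2 (Matrix.mulVec (-γ • (Matrix.vecMulVec (φ t) (φ t) * Φ t)) v) := by
    ext i
    rw [Matrix.smul_mulVec, ← Matrix.mulVec_mulVec, Matrix.vecMulVec_mulVec,
      EuclideanSpace.inner_eq_star_dotProduct, star_trivial, dotProduct_comm]
    simp only [PiLp.smul_apply, Pi.smul_apply, smul_eq_mul, MulOpposite.smul_eq_mul_unop,
      MulOpposite.unop_op]
    ring
  rw [rank_one_mulVec]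
  exact (PiLp.continuousLinearEquiv 2 ℝ fun _ : ι => ℝ).symm.toContinuousLinearMap.hasFDerivAt
    |>.comp_hasDerivWithinAt t hderiv

theorem stmt6_general {γ₁ γ₂ η : ℝ} {Φ₁ Φ₂ : ℝ → Matrix ι ι ℝ} (hγ₁ : 0 ≤ γ₁) (hγ₂ : 0 ≤ γ₂)
    (hab : a ≤ b) (hφ : ContinuousOn φ (Icc a b)) (hexc : IsExciting φ a b η)
    (hΦ₁ : IsTransitionMatrix γ₁ φ a b Φ₁) (hΦ₂ : IsTransitionMatrix γ₂ φ a b Φ₂)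
    (hgap : 1 - 2 * η * γ₁ / (1 + γ₁ * ∫ s in a..b, ‖φ s‖ ^ 2) ^ 2 <
      Real.exp (-(2 * γ₂ * ∫ s in a..b, ‖φ s‖ ^ 2))) :
    IsUnit (Φ₁ b - Φ₂ b) := by
  refine isUnit_sub_of_mulVec_ne fun v hv heq => ?_
  have upper := (hΦ₁.isErrorTrajectory_mulVec v).norm_sq_le_of_isExciting hγ₁ hab hφ hexc
  have lower := (hΦ₂.isErrorTrajectory_mulVec v).exp_mul_norm_sq_le hγ₂ hab hφ
  simp only [hΦ₁.initial, hΦ₂.initial, Matrix.one_mulVec, heq] at upper lower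
  have hv_pos : 0 < ‖(WithLp.toLp 2 v : EuclideanSpace ℝ ι)‖ ^ 2 := by
    have : (WithLp.toLp 2 v : EuclideanSpace ℝ ι) ≠ 0 := by simpa using hv
    positivity
  exact (mul_lt_mul_of_pos_right hgap hv_pos).not_ge (lower.trans upper)

end TransitionMatrix

/-- Invertibility of `Φ₁(δ) − Φ₂(δ)` under interval excitation and
the design conditions (7)–(8). -/
theorem stmt6 (n : ℕ) (hn : 1 ≤ n) (δ : ℝ) (hδ : 0 < δ)
    (γ₁ γ₂ : ℝ) (hγ₁ : 0 < γ₁) (hγ₂ : 0 < γ₂) (hγ : γ₁ ≠ γ₂)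
    (φM : ℝ) (hφM : 0 ≤ φM) (η : ℝ) (hη : 0 < η)
    (φ : ℝ → EuclideanSpace ℝ (Fin n)) (hφc : Continuous φ)
    (hbound : ∀ s ∈ Set.Icc (0 : ℝ) δ, ‖φ s‖ ≤ φM)
    (hexc : ∀ v : EuclideanSpace ℝ (Fin n), η * ‖v‖ ^ 2 ≤ ∫ s in (0:ℝ)..δ, ⟪φ s, v⟫ ^ 2)
    (Φ₁ Φ₂ : ℝ → Matrix (Fin n) (Fin n) ℝ)
    (hΦ₁0 : Φ₁ 0 = 1) (hΦ₂0 : Φ₂ 0 = 1)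
    (hΦ₁ : ∀ t ∈ Set.Icc (0 : ℝ) δ, ∀ i j, HasDerivAt (fun s => Φ₁ s i j)
      ((-γ₁ • (Matrix.vecMulVec (φ t) (φ t) * Φ₁ t)) i j) t)
    (hΦ₂ : ∀ t ∈ Set.Icc (0 : ℝ) δ, ∀ i j, HasDerivAt (fun s => Φ₂ s i j)
      ((-γ₂ • (Matrix.vecMulVec (φ t) (φ t) * Φ₂ t)) i j) t)
    (h7 : 0 < φM ^ 2 * γ₂ * δ) (h7' : φM ^ 2 * γ₂ * δ < 1)
    (h8 : 0 < (1 - 2 * η * γ₁ / (1 + φM ^ 2 * γ₁ * δ) ^ 2) *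
      (1 + 2 * γ₂ * φM ^ 2 * δ / (1 - φM ^ 2 * γ₂ * δ) ^ 2))
    (h8' : (1 - 2 * η * γ₁ / (1 + φM ^ 2 * γ₁ * δ) ^ 2) *
      (1 + 2 * γ₂ * φM ^ 2 * δ / (1 - φM ^ 2 * γ₂ * δ) ^ 2) < 1) :
    IsUnit (Φ₁ δ - Φ₂ δ) :=
  stmt6_general hγ₁.le hγ₂.le hδ.le hφc.continuousOn hexc
    ⟨hΦ₁0, fun t ht i j => (hΦ₁ t ht i j).hasDerivWithinAt⟩
    ⟨hΦ₂0, fun t ht i j => (hΦ₂ t ht i j).hasDerivWithinAt⟩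
    (one_sub_div_lt_exp_neg_integral_of_norm_le hη.le hγ₁.le hγ₂.le hδ.le hφc.continuousOn hbound
      (by rwa [sub_zero]) (by rwa [sub_zero]))
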